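/- Let (F, θ) be an LCS structure on a unimodular almost-complex Lie algebra (𝔤, J) inducing an LCAK metric g, and suppose that T = θ^♯ is g-orthogonal to the image of the Nijenhuis tensor. Then g is a pluricanonical LCAK metric if and only if g([T, JT], JT) = 0. -/

import Mathlib

noncomputable section

namespace LieLCAK

variable {L : Type*} [LieRing L] [LieAlgebra ℝ L]

/-- the Nijenhuis tensor of an almost complex structure `J` on a Lie algebra. -/
def nijenhuis (J : L → L) (X Y : L) : L :=
  (4 : ℝ)⁻¹ • (⁅J X, J Y⁆ - ⁅X, Y⁆ - J ⁅J X, Y⁆ - J ⁅X, J Y⁆)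

/-- the Lie algebra is unimodular: `tr (ad x) = 0` for every `x`. -/
def Unimodular (L : Type*) [LieRing L] [LieAlgebra ℝ L] : Prop :=
  ∀ X : L, LinearMap.trace ℝ L (LieAlgebra.ad ℝ L X) = 0

end LieLCAK

open LieLCAK

/-!
The condition on `Dθ` says that `c = 𝓛_T F` vanishes: by the Koszul formula the `J`-invariant part
of `Dθ` is `c(·, J·) / 2`, because `c` is itself `J`-invariant once `T` is orthogonal to the image
of the Nijenhuis tensor. That orthogonality gives `θ(J[JX, JY]) = θ(J[X, Y])`, from which
orthogonality to `JT` follows too.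

Like `F`, the form `c` is closed for the twisted differential `d - θ ∧ ·`. Write `c = F(C·, ·)` and
`θ = F(S, ·)`, so that `S = -JT`. Contracting the two closedness conditions with the Poisson
bivector of `F`, and using unimodularity, gives `tr (C²) = n c(T, S)`, where `n = dim 𝔤`; this
needs neither `J` nor positivity. As `C` is `g`-symmetric, the left side is `‖C‖²`, while
`c(T, S)` equals `g([T, JT], JT)`.
-/

open LinearMap (BilinForm)
open Module (Basis Dual)

namespace LieLCAK

section DualBasis

variable {K V ι : Type*} [Field K] [AddCommGroup V] [Module K V] [Fintype ι] [DecidableEq ι]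
  {ω : BilinForm K V}

theorem sum_smul_dualBasis (hω : ω.Nondegenerate) (e : Basis ι K V) (x : V) :
    ∑ i, ω x (e i) • ω.dualBasis hω e i = x := by
  simpa only [BilinForm.dualBasis_repr_apply] using (ω.dualBasis hω e).sum_repr x

theorem trace_eq_sum_dualBasis (hω : ω.Nondegenerate) (e : Basis ι K V) (A : Module.End K V) :
    LinearMap.trace K V A = ∑ i, ω (A (ω.dualBasis hω e i)) (e i) := by
  simp only [LinearMap.trace_eq_matrix_trace K (ω.dualBasis hω e), Matrix.trace, Matrix.diag_apply,
    LinearMap.toMatrix_apply, BilinForm.dualBasis_repr_apply]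

theorem sum_basis_dualBasis_eq_neg {W : Type*} [AddCommGroup W] [Module K W]
    (hω : ω.Nondegenerate) (halt : ω.IsAlt) (e : Basis ι K V) (u : V →ₗ[K] V →ₗ[K] W) :
    ∑ i, u (e i) (ω.dualBasis hω e i) = -∑ i, u (ω.dualBasis hω e i) (e i) := by
  set f := ω.dualBasis hω e
  calc ∑ i, u (e i) (f i)
      = ∑ i, ∑ j, ω (e i) (e j) • u (f j) (f i) := by
        refine Finset.sum_congr rfl fun i _ ↦ ?_
        nth_rw 1 [← sum_smul_dualBasis hω e (e i)]
        simp only [map_sum, map_smul, LinearMap.sum_apply, LinearMap.smul_apply, f]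
    _ = ∑ j, ∑ i, ω (e i) (e j) • u (f j) (f i) := Finset.sum_comm
    _ = -∑ j, u (f j) (e j) := by
        rw [← Finset.sum_neg_distrib]
        refine Finset.sum_congr rfl fun j _ ↦ ?_
        nth_rw 2 [← sum_smul_dualBasis hω e (e j)]
        simp only [map_sum, map_smul, ← Finset.sum_neg_distrib, ← neg_smul, halt.neg_eq, f]

end DualBasis

theorem trace_eq_of_isAdjointPair {K V : Type*} [Field K] [AddCommGroup V] [Module K V]
    [FiniteDimensional K V] {B : BilinForm K V} (hB : B.Nondegenerate) {A A' : Module.End K V}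
    (h : LinearMap.IsAdjointPair B B A A') : LinearMap.trace K V A = LinearMap.trace K V A' := by
  let e := Module.finBasis K V
  rw [trace_eq_sum_dualBasis hB e, trace_eq_sum_dualBasis hB.flip (B.dualBasis hB e),
    BilinForm.dualBasis_flip_dualBasis]
  exact Finset.sum_congr rfl fun i _ ↦ h _ _

theorem eq_zero_of_isSymmetric_of_trace_mul_self_eq_zero {𝕜 E : Type*} [RCLike 𝕜]
    [NormedAddCommGroup E] [InnerProductSpace 𝕜 E] [FiniteDimensional 𝕜 E] {A : E →ₗ[𝕜] E}
    (hA : A.IsSymmetric) (h : LinearMap.trace 𝕜 E (A * A) = 0) : A = 0 := by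
  let b := stdOrthonormalBasis 𝕜 E
  have hsum : ∑ i, ‖A (b i)‖ ^ 2 = 0 := by
    have hterm (i) : inner 𝕜 (b i) ((A * A) (b i)) = (‖A (b i)‖ : 𝕜) ^ 2 :=
      (hA (b i) (A (b i))).symm.trans (inner_self_eq_norm_sq_to_K _)
    simp only [LinearMap.trace_eq_sum_inner _ b, hterm] at h
    exact_mod_cast h
  rw [Finset.sum_eq_zero_iff_of_nonneg fun _ _ ↦ sq_nonneg _] at hsum
  refine b.toBasis.ext fun i ↦ ?_
  simpa using hsum i (Finset.mem_univ i)

theorem eq_zero_of_isSelfAdjoint_of_trace_mul_self_eq_zero {V : Type*} [AddCommGroup V]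
    [Module ℝ V] [FiniteDimensional ℝ V] {g : BilinForm ℝ V} (hsymm : g.IsSymm)
    (hpos : ∀ x, x ≠ 0 → 0 < g x x) {A : Module.End ℝ V} (hA : g.IsSelfAdjoint A)
    (h : LinearMap.trace ℝ V (A * A) = 0) : A = 0 := by
  let core : InnerProductSpace.Core ℝ V :=
    { inner := fun x y ↦ g x y
      conj_inner_symm := fun x y ↦ hsymm.eq y x
      re_inner_nonneg := fun x ↦ by
        obtain rfl | hx := eq_or_ne x 0
        · simp
        · exact (hpos x hx).le
      add_left := by simp
      smul_left := by simp
      definite := fun x hx ↦ by_contra fun hne ↦ (hpos x hne).ne' hx }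
  let _ : NormedAddCommGroup V := core.toNormedAddCommGroup
  let _ : InnerProductSpace ℝ V := .ofCore core.toCore
  exact eq_zero_of_isSymmetric_of_trace_mul_self_eq_zero (𝕜 := ℝ) hA h

section TwistedClosed

variable {R L : Type*} [CommRing R] [LieRing L] [LieAlgebra R L]
  {θ : Dual R L} {ω : BilinForm R L}

/-- Closedness `dω = θ ∧ ω` of a 2-form for the differential twisted by the 1-form `θ`, where `d` is
the Chevalley–Eilenberg differential. -/
def IsTwistedClosed (θ : Dual R L) (ω : BilinForm R L) : Prop :=
  ∀ X Y Z : L, -ω ⁅X, Y⁆ Z + ω ⁅X, Z⁆ Y - ω ⁅Y, Z⁆ X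
    = θ X * ω Y Z - θ Y * ω X Z + θ Z * ω X Y

/-- The Lie derivative `𝓛_X ω = -ω([X, ·], ·) - ω(·, [X, ·])` of a left-invariant bilinear form. -/
def lieDeriv (X : L) (ω : BilinForm R L) : BilinForm R L :=
  -(ω.compLeft (LieAlgebra.ad R L X) + ω.compRight (LieAlgebra.ad R L X))

theorem lieDeriv_apply (X Y Z : L) : lieDeriv X ω Y Z = -ω ⁅X, Y⁆ Z - ω Y ⁅X, Z⁆ := by
  simp only [lieDeriv, LinearMap.neg_apply, LinearMap.add_apply, BilinForm.compLeft_apply,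
    BilinForm.compRight_apply, LieAlgebra.ad_apply]
  ring

theorem lieDeriv_apply_self (X Z : L) : lieDeriv X ω X Z = -ω X ⁅X, Z⁆ := by
  rw [lieDeriv_apply, lie_self, LinearMap.map_zero₂, neg_zero, zero_sub]

theorem isAlt_lieDeriv (halt : ω.IsAlt) (X : L) : (lieDeriv X ω).IsAlt := fun Y ↦ by
  rw [lieDeriv_apply, halt.neg_eq, sub_self]

theorem isAdjointPair_add_ad_neg_ad {C : Module.End R L} {T : L}
    (hC : ∀ Y Z, ω (C Y) Z = lieDeriv T ω Y Z) :
    LinearMap.IsAdjointPair ω ω ⇑(C + LieAlgebra.ad R L T) ⇑(-LieAlgebra.ad R L T) := fun Y Z ↦ by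
  simp only [LinearMap.add_apply, LinearMap.neg_apply, map_add, map_neg, LieAlgebra.ad_apply, hC,
    lieDeriv_apply]
  ring

namespace IsTwistedClosed

protected theorem lieDeriv (h : IsTwistedClosed θ ω) (hθ : ∀ X Y : L, θ ⁅X, Y⁆ = 0) (W : L) :
    IsTwistedClosed θ (lieDeriv W ω) := fun X Y Z ↦ by
  have hX := h ⁅W, X⁆ Y Z
  have hY := h X ⁅W, Y⁆ Z
  have hZ := h X Y ⁅W, Z⁆
  simp only [hθ] at hX hY hZ
  simp only [lieDeriv_apply, leibniz_lie W, map_add, LinearMap.add_apply]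
  linear_combination -hX - hY - hZ

theorem lieDeriv_apply (h : IsTwistedClosed θ ω) (halt : ω.IsAlt) (X Y Z : L) :
    lieDeriv X ω Y Z = ω ⁅Y, Z⁆ X + θ X * ω Y Z - θ Y * ω X Z + θ Z * ω X Y := by
  rw [LieLCAK.lieDeriv_apply]
  linear_combination h X Y Z + halt.neg_eq ⁅X, Z⁆ Y

end IsTwistedClosed

end TwistedClosed

section LCS

variable {K L ι : Type*} [Field K] [LieRing L] [LieAlgebra K L] [Fintype ι] [DecidableEq ι]
  {θ : Dual K L} {ω : BilinForm K L} {C : Module.End K L} {S T : L}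

/-- The contraction of the Lie bracket with the Poisson bivector of a symplectic form `ω`. It is
computed in a basis `e`, on whose choice it does not depend. -/
def bracketContraction (hω : ω.Nondegenerate) (e : Basis ι K L) : L :=
  ∑ i, ⁅ω.dualBasis hω e i, e i⁆

theorem IsTwistedClosed.neg_two_mul_trace_mul_ad {c : BilinForm K L} (hc : IsTwistedClosed θ c)
    (hω : ω.Nondegenerate) (halt : ω.IsAlt) (hS : ω S = θ) (hC : ∀ Y Z, ω (C Y) Z = c Y Z)
    (e : Basis ι K L) (X : L) :
    -2 * LinearMap.trace K L (C * LieAlgebra.ad K L X)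
      = c (bracketContraction hω e) X + θ X * LinearMap.trace K L C + 2 * c X S := by
  set f := ω.dualBasis hω e with hf
  have contracted := Finset.sum_congr rfl fun i (_ : i ∈ Finset.univ) ↦ hc X (f i) (e i)
  simp only [Finset.sum_add_distrib, Finset.sum_sub_distrib, Finset.sum_neg_distrib,
    ← Finset.mul_sum] at contracted
  have trace_C_ad : ∑ i, c ⁅X, f i⁆ (e i) = LinearMap.trace K L (C * LieAlgebra.ad K L X) := by
    simp only [trace_eq_sum_dualBasis hω e, Module.End.mul_apply, LieAlgebra.ad_apply, hC, hf]
  have trace_C : ∑ i, c (f i) (e i) = LinearMap.trace K L C := by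
    simp only [trace_eq_sum_dualBasis hω e, hC, hf]
  have swap_bracket : ∑ i, c ⁅X, e i⁆ (f i) = -∑ i, c ⁅X, f i⁆ (e i) :=
    sum_basis_dualBasis_eq_neg hω halt e (c.compLeft (LieAlgebra.ad K L X))
  have swap_θ : ∑ i, θ (e i) * c X (f i) = -∑ i, θ (f i) * c X (e i) :=
    sum_basis_dualBasis_eq_neg hω halt e (BilinForm.linMulLin θ (c X))
  have contract_θ : ∑ i, θ (e i) * c X (f i) = c X S := by
    conv_rhs => rw [← sum_smul_dualBasis hω e S]
    simp only [map_sum, map_smul, hS, smul_eq_mul, hf]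
  have contract_bracket : ∑ i, c ⁅f i, e i⁆ X = c (bracketContraction hω e) X := by
    simp only [bracketContraction, map_sum, LinearMap.sum_apply, hf]
  linear_combination contracted + 2 * trace_C_ad + θ X * trace_C - swap_bracket - swap_θ
    + 2 * contract_θ + contract_bracket

theorem trace_eq_zero_of_lieDeriv [FiniteDimensional K L] (hω : ω.Nondegenerate)
    (hT : LinearMap.trace K L (LieAlgebra.ad K L T) = 0)
    (hC : ∀ Y Z, ω (C Y) Z = lieDeriv T ω Y Z) : LinearMap.trace K L C = 0 := by
  simpa only [map_add, map_neg, hT, add_zero, neg_zero] using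
    trace_eq_of_isAdjointPair hω (isAdjointPair_add_ad_neg_ad hC)

/-- A locally conformally symplectic structure `(ω, θ)` on a Lie algebra. -/
structure IsLCS (ω : BilinForm K L) (θ : Dual K L) : Prop where
  isAlt : ω.IsAlt
  nondegenerate : ω.Nondegenerate
  apply_lie : ∀ X Y : L, θ ⁅X, Y⁆ = 0
  isTwistedClosed : IsTwistedClosed θ ω

namespace IsLCS

theorem bracketContraction_eq_smul (h : IsLCS ω θ)
    (huni : ∀ X, LinearMap.trace K L (LieAlgebra.ad K L X) = 0) (hS : ω S = θ) (e : Basis ι K L) :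
    bracketContraction h.nondegenerate e = (2 - Module.finrank K L : K) • S := by
  have := Module.Finite.of_basis e
  refine sub_eq_zero.mp (h.nondegenerate.1 _ fun X ↦ ?_)
  have key := h.isTwistedClosed.neg_two_mul_trace_mul_ad h.nondegenerate h.isAlt hS (C := 1)
    (fun _ _ ↦ rfl) e X
  rw [one_mul, huni, LinearMap.trace_one, ← h.isAlt.neg_eq S X, hS] at key
  rw [map_sub, map_smul, LinearMap.sub_apply, LinearMap.smul_apply, hS, smul_eq_mul]
  linear_combination -key

variable [FiniteDimensional K L]

theorem two_mul_trace_mul_ad (h : IsLCS ω θ)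
    (huni : ∀ X, LinearMap.trace K L (LieAlgebra.ad K L X) = 0) (hS : ω S = θ)
    {c : BilinForm K L} (hc : IsTwistedClosed θ c) (hcalt : c.IsAlt)
    (hC : ∀ Y Z, ω (C Y) Z = c Y Z) (htr : LinearMap.trace K L C = 0) (X : L) :
    2 * LinearMap.trace K L (C * LieAlgebra.ad K L X) = -Module.finrank K L * c X S := by
  have key := hc.neg_two_mul_trace_mul_ad h.nondegenerate h.isAlt hS hC (Module.finBasis K L) X
  rw [h.bracketContraction_eq_smul huni hS, htr, map_smul, LinearMap.smul_apply, ← hcalt.neg_eq,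
    smul_eq_mul] at key
  linear_combination -key

theorem trace_mul_self (h : IsLCS ω θ)
    (huni : ∀ X, LinearMap.trace K L (LieAlgebra.ad K L X) = 0) (hS : ω S = θ)
    (hC : ∀ Y Z, ω (C Y) Z = lieDeriv T ω Y Z) :
    LinearMap.trace K L (C * C) = Module.finrank K L * lieDeriv T ω T S := by
  set A := LieAlgebra.ad K L T with hA
  have halt := isAlt_lieDeriv h.isAlt T
  have hCself : LinearMap.IsAdjointPair ω ω C C := fun Y Z ↦ by
    rw [hC, ← halt.neg_eq, ← hC, h.isAlt.neg_eq]
  have hsum : LinearMap.trace K L (C * C) + LinearMap.trace K L (C * A)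
      = -LinearMap.trace K L (C * A) := by
    have := trace_eq_of_isAdjointPair h.nondegenerate (hCself.mul (isAdjointPair_add_ad_neg_ad hC))
    simpa only [mul_add, neg_mul, map_add, map_neg, ← hA, LinearMap.trace_mul_comm K A C] using this
  linear_combination hsum - h.two_mul_trace_mul_ad huni hS
    (h.isTwistedClosed.lieDeriv h.apply_lie T) halt hC
    (trace_eq_zero_of_lieDeriv h.nondegenerate (huni T) hC) T

end IsLCS

end LCS

section Nijenhuis

variable {L : Type*} [LieRing L] [LieAlgebra ℝ L] {J : L →ₗ[ℝ] L} {θ : Dual ℝ L}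

theorem apply_J_lie_J_J (hJ : ∀ X, J (J X) = -X) (hθ : ∀ X Y : L, θ ⁅X, Y⁆ = 0)
    (hN : ∀ X Y, θ (nijenhuis J X Y) = 0) (X Y : L) : θ (J ⁅J X, J Y⁆) = θ (J ⁅X, Y⁆) := by
  have h := hN X (J Y)
  simp only [nijenhuis, map_smul, map_sub, hθ, hJ, lie_neg, map_neg, smul_eq_mul] at h
  linarith

theorem apply_J_nijenhuis (hJ : ∀ X, J (J X) = -X) (hθ : ∀ X Y : L, θ ⁅X, Y⁆ = 0)
    (hN : ∀ X Y, θ (nijenhuis J X Y) = 0) (X Y : L) : θ (J (nijenhuis J X Y)) = 0 := by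
  simp [nijenhuis, hJ, hθ, apply_J_lie_J_J hJ hθ hN]

end Nijenhuis

theorem two_mul_apply_of_koszul {R L : Type*} [CommRing R] [LieRing L] [LieAlgebra R L]
    {g : BilinForm R L} (hg : g.IsSymm) {D : L → L → L}
    (hD : ∀ X Y Z : L, 2 * g (D X Y) Z = g ⁅X, Y⁆ Z - g ⁅Y, Z⁆ X + g ⁅Z, X⁆ Y)
    {θ : Dual R L} (hθ : ∀ X Y : L, θ ⁅X, Y⁆ = 0) {T : L} (hT : g T = θ) (X Y : L) :
    2 * θ (D X Y) = g ⁅T, X⁆ Y + g ⁅T, Y⁆ X := by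
  have h := hD X Y T
  rw [hg.eq, hg.eq ⁅X, Y⁆, hT, hθ, ← lie_skew, LinearMap.map_neg₂] at h
  linear_combination h

section Compatible

variable {R V : Type*} [CommRing R] [AddCommGroup V] [Module R V] {J : V →ₗ[R] V}
  {F : BilinForm R V}

theorem apply_J_comm (hJ : ∀ X, J (J X) = -X) (halt : F.IsAlt)
    (hF : ∀ X Y, F (J X) (J Y) = F X Y) (X Y : V) : F X (J Y) = F Y (J X) := by
  rw [← hF X, hJ, map_neg, halt.neg_eq]

theorem apply_eq_neg_apply_J (hJ : ∀ X, J (J X) = -X) {θ : Dual R V} {T : V}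
    (hT : ∀ X, F T (J X) = θ X) (X : V) : F T X = -θ (J X) := by
  rw [← hT, hJ, map_neg, neg_neg]

end Compatible

theorem lieDeriv_J_J {R L : Type*} [CommRing R] [LieRing L] [LieAlgebra R L] {J : L →ₗ[R] L}
    {F : BilinForm R L} {θ : Dual R L} {T : L} (h : IsTwistedClosed θ F)
    (hJ : ∀ X, J (J X) = -X) (halt : F.IsAlt)
    (hF : ∀ X Y, F (J X) (J Y) = F X Y) (hT : ∀ X, F T (J X) = θ X)
    (hθJ : ∀ X Y, θ (J ⁅J X, J Y⁆) = θ (J ⁅X, Y⁆)) (X Y : L) :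
    lieDeriv T F (J X) (J Y) = lieDeriv T F X Y := by
  have hleft := apply_eq_neg_apply_J hJ hT
  have hright (Z : L) : F Z T = θ (J Z) := by rw [← halt.neg_eq, hleft, neg_neg]
  simp only [h.lieDeriv_apply halt, hF, hT, hleft, hright, hθJ]
  ring

section LCAK

variable {L : Type*} [LieRing L] [LieAlgebra ℝ L] {J : L →ₗ[ℝ] L} {F : BilinForm ℝ L}
  {θ : Dual ℝ L} {T : L}

theorem neg_apply_add_neg_apply_J_J_of_koszul (hJ : ∀ X, J (J X) = -X) (halt : F.IsAlt)
    (hF : ∀ X Y, F (J X) (J Y) = F X Y) (hθ : ∀ X Y : L, θ ⁅X, Y⁆ = 0)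
    (hT : ∀ X, F T (J X) = θ X)
    (hc : ∀ X Y, lieDeriv T F (J X) (J Y) = lieDeriv T F X Y) {D : L → L → L}
    (hD : ∀ X Y Z : L,
      2 * F (D X Y) (J Z) = F ⁅X, Y⁆ (J Z) - F ⁅Y, Z⁆ (J X) + F ⁅Z, X⁆ (J Y)) (X Y : L) :
    -θ (D X Y) + -θ (D (J X) (J Y)) = lieDeriv T F X (J Y) := by
  have koszul := two_mul_apply_of_koszul (g := F.compRight J) ⟨apply_J_comm hJ halt hF⟩ hD hθ
    (LinearMap.ext hT)
  have hXY := koszul X Y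
  have hJXJY := koszul (J X) (J Y)
  have hcomm := apply_J_comm hJ (isAlt_lieDeriv halt T) hc X Y
  simp only [BilinForm.compRight_apply, hJ, map_neg] at hXY hJXJY
  simp only [lieDeriv_apply] at hcomm ⊢
  linarith [halt.neg_eq X ⁅T, J Y⁆, halt.neg_eq Y ⁅T, J X⁆]

theorem IsLCS.lieDeriv_eq_zero_iff [FiniteDimensional ℝ L] (h : IsLCS F θ) (huni : Unimodular L)
    (hJ : ∀ X, J (J X) = -X) (hF : ∀ X Y, F (J X) (J Y) = F X Y)
    (hpos : ∀ X, X ≠ 0 → 0 < F X (J X)) (hT : ∀ X, F T (J X) = θ X)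
    (hc : ∀ X Y, lieDeriv T F (J X) (J Y) = lieDeriv T F X Y) :
    lieDeriv T F = 0 ↔ F ⁅T, J T⁆ (J (J T)) = 0 := by
  have hTJT : F ⁅T, J T⁆ (J (J T)) = -lieDeriv T F T (J T) := by
    rw [hJ, map_neg, h.isAlt.neg_eq, lieDeriv_apply_self, neg_neg]
  refine ⟨fun h0 ↦ by rw [hTJT, h0, LinearMap.zero_apply, LinearMap.zero_apply, neg_zero],
    fun h0 ↦ ?_⟩
  set C := (lieDeriv T F).symmCompOfNondegenerate F h.nondegenerate
  have hC (Y Z : L) : F (C Y) Z = lieDeriv T F Y Z :=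
    BilinForm.symmCompOfNondegenerate_left_apply _ _ _ _
  have hS : F (-J T) = θ := LinearMap.ext fun X ↦ by
    rw [map_neg, LinearMap.neg_apply, h.isAlt.neg_eq, apply_J_comm hJ h.isAlt hF, hT]
  have htrace : LinearMap.trace ℝ L (C * C) = 0 := by
    rw [h.trace_mul_self huni hS hC, map_neg, ← hTJT, h0, mul_zero]
  have hgsymm : (F.compRight J).IsSymm := ⟨apply_J_comm hJ h.isAlt hF⟩
  have hCself : (F.compRight J).IsSelfAdjoint C := fun X Y ↦ by
    rw [hgsymm.eq X, BilinForm.compRight_apply, BilinForm.compRight_apply, hC, hC,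
      apply_J_comm hJ (isAlt_lieDeriv h.isAlt T) hc]
  have hC0 : C = 0 := eq_zero_of_isSelfAdjoint_of_trace_mul_self_eq_zero hgsymm hpos hCself htrace
  exact LinearMap.ext₂ fun Y Z ↦ by simp only [← hC, hC0, LinearMap.zero_apply, map_zero]

end LCAK

end LieLCAK

/-- Let `(F, θ)` be an LCS structure on a unimodular almost complex Lie
algebra `(𝔤, J)` inducing an LCAK metric `g` (so `g = F(·, J·)` is a positive definite
inner product), with Levi-Civita connection `D` given by the Koszul formula, and
`T = θ^♯`.  Suppose that `T` is `g`-orthogonal to the image of the Nijenhuis tensor.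
Then `g` is a pluricanonical LCAK metric (the image of the Nijenhuis tensor is
`g`-orthogonal to `Span(T, JT)` and `Dθ` is `J`-anti-invariant, where
`(D_X θ)(Y) = -θ(D_X Y)`) if and only if `g([T, JT], JT) = 0`. -/
theorem stmt3 (L : Type*) [LieRing L] [LieAlgebra ℝ L] [FiniteDimensional ℝ L]
    (huni : Unimodular L)
    (J : L → L) (hJlin : IsLinearMap ℝ J) (hJsq : ∀ X, J (J X) = - X)
    (F : L → L → ℝ)
    (hFbilin : ∀ X : L, IsLinearMap ℝ (F X) ∧ IsLinearMap ℝ fun Y => F Y X)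
    (hFalt : ∀ X Y, F X Y = - F Y X)
    (hFnondeg : ∀ X, (∀ Y, F X Y = 0) → X = 0)
    (θ : L → ℝ) (hθlin : IsLinearMap ℝ θ)
    (hθclosed : ∀ X Y : L, θ ⁅X, Y⁆ = 0)
    (hlcs : ∀ X Y Z : L,
      -F ⁅X, Y⁆ Z + F ⁅X, Z⁆ Y - F ⁅Y, Z⁆ X
        = θ X * F Y Z - θ Y * F X Z + θ Z * F X Y)
    (g : L → L → ℝ) (hgdef : ∀ X Y, g X Y = F X (J Y))
    (hgsymm : ∀ X Y, g X Y = g Y X)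
    (hgpos : ∀ X : L, X ≠ 0 → 0 < g X X)
    (D : L → L → L)
    (hKoszul : ∀ X Y Z : L,
      2 * g (D X Y) Z = g ⁅X, Y⁆ Z - g ⁅Y, Z⁆ X + g ⁅Z, X⁆ Y)
    (T : L) (hT : ∀ X, g T X = θ X)
    (hNorthT : ∀ X Y, g (nijenhuis J X Y) T = 0) :
    ((∀ X Y, g (nijenhuis J X Y) T = 0 ∧ g (nijenhuis J X Y) (J T) = 0) ∧
        (∀ X Y, -θ (D X Y) + -θ (D (J X) (J Y)) = 0))
      ↔ g ⁅T, J T⁆ (J T) = 0 := by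
  obtain ⟨J, rfl⟩ : ∃ J' : L →ₗ[ℝ] L, J = J' := ⟨hJlin.mk' J, rfl⟩
  obtain ⟨θ, rfl⟩ : ∃ θ' : Dual ℝ L, θ = θ' := ⟨hθlin.mk' θ, rfl⟩
  obtain ⟨F, rfl⟩ : ∃ F' : BilinForm ℝ L, F = fun X Y ↦ F' X Y :=
    ⟨LinearMap.mk₂ ℝ F (fun _ _ Z ↦ (hFbilin Z).2.map_add _ _)
      (fun _ _ Z ↦ (hFbilin Z).2.map_smul _ _) (fun X _ _ ↦ (hFbilin X).1.map_add _ _)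
      (fun _ X _ ↦ (hFbilin X).1.map_smul _ _), rfl⟩
  obtain rfl : g = fun X Y ↦ F X (J Y) := funext₂ hgdef
  beta_reduce at *
  have hF : IsLCS F θ :=
    ⟨fun X ↦ self_eq_neg.mp (hFalt X X), .ofSeparatingLeft hFnondeg, hθclosed, hlcs⟩
  have hFJ (X Y : L) : F (J X) (J Y) = F X Y := by
    rw [hgsymm, hJsq, map_neg, hF.isAlt.neg_eq]
  have hθN (X Y : L) : θ (nijenhuis J X Y) = 0 := by rw [← hT, hgsymm, hNorthT]
  have hNorthJT (X Y : L) : F (nijenhuis J X Y) (J (J T)) = 0 := by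
    rw [hgsymm, hFJ, apply_eq_neg_apply_J hJsq hT, apply_J_nijenhuis hJsq hθclosed hθN, neg_zero]
  have hc := lieDeriv_J_J hlcs hJsq hF.isAlt hFJ hT (apply_J_lie_J_J hJsq hθclosed hθN)
  have hDθ := neg_apply_add_neg_apply_J_J_of_koszul hJsq hF.isAlt hFJ hθclosed hT hc hKoszul
  rw [← hF.lieDeriv_eq_zero_iff huni hJsq hFJ hgpos hT hc]
  refine ⟨fun h ↦ LinearMap.ext₂ fun X Y ↦ ?_,
    fun h ↦ ⟨fun X Y ↦ ⟨hNorthT X Y, hNorthJT X Y⟩, fun X Y ↦ ?_⟩⟩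
  · rw [← hc, ← hDθ, h.2, LinearMap.zero_apply, LinearMap.zero_apply]
  · rw [hDθ, h, LinearMap.zero_apply, LinearMap.zero_apply]

end
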